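/- Let R = F₂+uF₂, G a finite group of order n, and v₁, v₂, v₃ ∈ RG. Let A be the 2n×2n block matrix with blocks σ(v₁), σ(v₂) in the first block row and σ(v₂), σ(v₃) in the second block row, and let C_σ ⊆ R^{4n} be the R-span of the rows of the 2n×4n matrix (I_{2n} | A). Then C_σ is a self-dual code of length 4n over R if and only if σ(v₁v₁* + v₂v₂*) = Iₙ, σ(v₁v₂* + v₂v₃*) = 0, σ(v₂v₁* + v₃v₂*) = 0, and σ(v₂v₂* + v₃v₃*) = Iₙ. -/

import Mathlib

open Matrix

/-- The four-element ring `F₂ + uF₂ = F₂[u]`, `u² = 0`: the dual numbers over `ZMod 2`. -/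
abbrev F2u : Type := DualNumber (ZMod 2)

/-- For `v = ∑ α_g g` in the group ring `RG`, `σ(v)` is the `G × G` matrix over `R` whose
`(g, h)` entry is the coefficient `α_{g⁻¹h}`. -/
def sigma {R G : Type*} [CommRing R] [Group G] (v : MonoidAlgebra R G) : Matrix G G R :=
  Matrix.of fun g h => v.coeff (g⁻¹ * h)

/-- The canonical involution on a group ring: `v* = ∑ α_g g⁻¹` for `v = ∑ α_g g`. -/
def invol {R G : Type*} [CommRing R] [Group G] (v : MonoidAlgebra R G) : MonoidAlgebra R G :=
  MonoidAlgebra.ofCoeff (Finsupp.equivMapDomain (Equiv.inv G) v.coeff)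

/-- The Euclidean dual of a set of vectors `C ⊆ Rⁿ`. -/
def dualCode {R : Type*} [CommRing R] {ι : Type*} [Fintype ι] (C : Set (ι → R)) :
    Set (ι → R) :=
  {x | ∀ y ∈ C, ∑ i, x i * y i = 0}


theorem sigma_add' {R G : Type*} [CommRing R] [Group G] (v w : MonoidAlgebra R G) :
    sigma (v + w) = sigma v + sigma w := by
  ext g h
  simp [sigma]

theorem sigma_mul' {R G : Type*} [CommRing R] [Group G] [Fintype G]
    (v w : MonoidAlgebra R G) :
    sigma (v * w) = sigma v * sigma w := by
  classical
  ext g h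
  simp only [sigma, Matrix.mul_apply, Matrix.of_apply]
  rw [MonoidAlgebra.coeff_mul_apply_left, Finsupp.sum_fintype _ _ (by simp),
    ← Equiv.sum_comp (Equiv.mulLeft g⁻¹)]
  refine Finset.sum_congr rfl fun j _ => ?_
  simp [mul_assoc]

theorem sigma_invol' {R G : Type*} [CommRing R] [Group G] (v : MonoidAlgebra R G) :
    sigma (invol v) = (sigma v)ᵀ := by
  ext g h
  simp [sigma, invol, Finsupp.equivMapDomain_apply]

theorem mem_code {ι : Type*} [Fintype ι] [DecidableEq ι] {R : Type*} [CommRing R]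
    (A : Matrix ι ι R) (w : ι ⊕ ι → R) :
    w ∈ Submodule.span R (Set.range fun k : ι =>
      (Sum.elim (fun j => if k = j then (1 : R) else 0) (fun j => A k j) : ι ⊕ ι → R)) ↔
    ∃ x : ι → R, Sum.elim x (x ᵥ* A) = w := by
  rw [Submodule.mem_span_range_iff_exists_fun]
  refine exists_congr fun x => ?_
  have : ∑ i, x i • (Sum.elim (fun j => if i = j then (1 : R) else 0) (fun j => A i j) :
      ι ⊕ ι → R) = Sum.elim x (x ᵥ* A) := by
    ext j
    rcases j with j | j
    · simp [Finset.sum_apply]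
    · simp [Finset.sum_apply, Matrix.vecMul, dotProduct]
  rw [this]

theorem mem_dual {ι : Type*} [Fintype ι] [DecidableEq ι] {R : Type*} [CommRing R]
    (A : Matrix ι ι R) (y z : ι → R) :
    Sum.elim y z ∈ dualCode ((Submodule.span R (Set.range fun k : ι =>
      (Sum.elim (fun j => if k = j then (1 : R) else 0) (fun j => A k j) : ι ⊕ ι → R)) :
      Submodule R (ι ⊕ ι → R)) : Set (ι ⊕ ι → R)) ↔ y + A *ᵥ z = 0 := by
  have key : ∀ x : ι → R, ∑ i, (Sum.elim y z : ι ⊕ ι → R) i * (Sum.elim x (x ᵥ* A) : ι ⊕ ι → R) i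
      = x ⬝ᵥ (y + A *ᵥ z) := by
    intro x
    rw [Fintype.sum_sum_type, dotProduct_add, dotProduct_mulVec, dotProduct_comm x y,
      dotProduct_comm (x ᵥ* A) z]
    rfl
  constructor
  · intro h
    refine dotProduct_eq_zero _ fun x => ?_
    rw [dotProduct_comm, ← key]
    exact h _ ((mem_code A _).2 ⟨x, rfl⟩)
  · rintro h w hw
    obtain ⟨x, rfl⟩ := (mem_code A w).1 hw
    rw [key, h, dotProduct_zero]

theorem selfDual_iff {ι : Type*} [Fintype ι] [DecidableEq ι] {R : Type*} [CommRing R]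
    [CharP R 2] (A : Matrix ι ι R) :
    ((Submodule.span R (Set.range fun k : ι =>
      (Sum.elim (fun j => if k = j then (1 : R) else 0) (fun j => A k j) : ι ⊕ ι → R)) :
      Submodule R (ι ⊕ ι → R)) : Set (ι ⊕ ι → R)) =
      dualCode ((Submodule.span R (Set.range fun k : ι =>
      (Sum.elim (fun j => if k = j then (1 : R) else 0) (fun j => A k j) : ι ⊕ ι → R)) :
      Submodule R (ι ⊕ ι → R)) : Set (ι ⊕ ι → R)) ↔ A * Aᵀ = 1 := by
  have h2 : ∀ x y : ι → R, x + y = 0 ↔ y = x := by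
    intro x y
    simp only [funext_iff, Pi.add_apply, Pi.zero_apply, CharTwo.add_eq_zero]
    exact forall_congr' fun _ => eq_comm
  constructor
  · intro h
    apply Matrix.ext_of_mulVec_single
    intro i
    have := (mem_dual A (Pi.single i 1) (Pi.single i 1 ᵥ* A)).1
      (h ▸ (mem_code A _).2 ⟨_, rfl⟩)
    rw [h2] at this
    rw [← mulVec_mulVec, mulVec_transpose, this, one_mulVec]
  · intro h
    ext w
    obtain ⟨y, z, rfl⟩ : ∃ y z, w = Sum.elim y z := ⟨_, _, (Sum.elim_comp_inl_inr w).symm⟩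
    rw [mem_dual, SetLike.mem_coe, mem_code, h2]
    constructor
    · rintro ⟨x, hx⟩
      have h1 : x = y := funext fun j => congrFun hx (Sum.inl j)
      have h3 : x ᵥ* A = z := funext fun j => congrFun hx (Sum.inr j)
      subst h1 h3
      rw [← mulVec_transpose, mulVec_mulVec, h, one_mulVec]
    · rintro rfl
      refine ⟨A *ᵥ z, ?_⟩
      rw [← mulVec_transpose, mulVec_mulVec, mul_eq_one_comm.1 h, one_mulVec]

instance charP_F2u : CharP F2u 2 := by
  exact charP_of_injective_algebraMap (R := ZMod 2) (TrivSqZeroExt.inl_injective) 2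

/-- Let `R = F₂+uF₂`, `G` a finite group of order `n`, and `v₁, v₂, v₃ ∈ RG`. Let
`A = [[σ(v₁), σ(v₂)], [σ(v₂), σ(v₃)]]` and let `C_σ ⊆ R^{4n}` be the `R`-span of the rows of
`(I_{2n} | A)`. Then `C_σ` is a self-dual code of length `4n` over `R` if and only if
`σ(v₁v₁* + v₂v₂*) = Iₙ`, `σ(v₁v₂* + v₂v₃*) = 0`, `σ(v₂v₁* + v₃v₂*) = 0` and
`σ(v₂v₂* + v₃v₃*) = Iₙ`. -/
theorem groupRing_construction_selfDual_iff_over_F2u {G : Type*} [Group G] [Fintype G]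
    [DecidableEq G] (n : ℕ) (hn : Fintype.card G = n) (v₁ v₂ v₃ : MonoidAlgebra F2u G)
    (A : Matrix (G ⊕ G) (G ⊕ G) F2u)
    (hA : A = Matrix.fromBlocks (sigma v₁) (sigma v₂) (sigma v₂) (sigma v₃))
    (C : Submodule F2u (((G ⊕ G) ⊕ (G ⊕ G)) → F2u))
    (hC : C = Submodule.span F2u (Set.range fun k : G ⊕ G =>
      (Sum.elim (fun j => if k = j then (1 : F2u) else 0) (fun j => A k j) :
        ((G ⊕ G) ⊕ (G ⊕ G)) → F2u))) :
    (C : Set (((G ⊕ G) ⊕ (G ⊕ G)) → F2u)) =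
        dualCode (C : Set (((G ⊕ G) ⊕ (G ⊕ G)) → F2u)) ↔
      (sigma (v₁ * invol v₁ + v₂ * invol v₂) = 1 ∧
       sigma (v₁ * invol v₂ + v₂ * invol v₃) = 0 ∧
       sigma (v₂ * invol v₁ + v₃ * invol v₂) = 0 ∧
       sigma (v₂ * invol v₂ + v₃ * invol v₃) = 1) := by
  subst hA hC
  rw [selfDual_iff]
  simp only [sigma_add', sigma_mul', sigma_invol']
  rw [fromBlocks_transpose, fromBlocks_multiply, ← fromBlocks_one, fromBlocks_inj]
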